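/- arXiv:1406.0317 — 4 statements merged into one kernel-verified Lean document; each statement's English description precedes it below -/
import Mathlib

section
/- Let K be a compact metric space equipped with its Borel σ-algebra, and let U be a finite-dimensional subspace of the space C(K, ℝ) of continuous real-valued functions on K. On the set P(K) of Borel probability measures on K define a preorder by: ν ⪯ ν' iff ∫_K u² dν ≤ ∫_K u² dν' for every u ∈ U. Let C ⊆ P(K) be a nonempty chain (totally ordered subset) with respect to ⪯. Then there exists a sequence (ν_i) of elements of C that is nondecreasing with respect to ⪯ and such that for every u ∈ U, the sequence ∫_K u² dν_i converges to sup_{ν ∈ C} ∫_K u² dν. -/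
open MeasureTheory Filter Topology

/-- The preorder on probability measures given by comparison of the integrals of `u ^ 2`
for all `u` in a subspace `U` of continuous functions: `ν ⪯ ν'` iff
`∫ u² dν ≤ ∫ u² dν'` for every `u ∈ U`. -/
def sqPre {K : Type*} [TopologicalSpace K] [MeasurableSpace K]
    (U : Submodule ℝ C(K, ℝ)) (ν ν' : ProbabilityMeasure K) : Prop :=
  ∀ u ∈ U, ∫ x, (u x) ^ 2 ∂(ν : Measure K) ≤ ∫ x, (u x) ^ 2 ∂(ν' : Measure K)

/-!
View each measure `ν` as the function `u ↦ ∫ u² dν` on `U`. These functions are equicontinuous,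
because integration against a probability measure is `1`-Lipschitz for the sup norm, and `⪯` is
their pointwise order. A directed family of functions, indexed by itself, converges pointwise to its
supremum. On a countable dense subset of `U` this convergence takes place in a first countable
product, so a monotone sequence from the family already converges there; by equicontinuity the set
of `u` at which that sequence converges to the supremum is closed, so it is all of `U`.
-/

section DirectedOrder

variable {α : Type*} [Preorder α] [IsDirectedOrder α] [Nonempty α]

theorem exists_monotone_nat_forall_exists_le {κ : Type*} [Countable κ] (b : κ → α) :
    ∃ x : ℕ → α, Monotone x ∧ ∀ k, ∃ n, b k ≤ x n := by
  have := Encodable.ofCountable κ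
  let above (k : κ) : Order.Cofinal α := ⟨Set.Ici (b k), fun a =>
    let ⟨c, hac, hbc⟩ := exists_ge_ge a (b k)
    ⟨c, hbc, hac⟩⟩
  obtain ⟨a⟩ := ‹Nonempty α›
  exact ⟨Order.sequenceOfCofinals a above, Order.sequenceOfCofinals.monotone a above,
    fun k => ⟨_, Order.sequenceOfCofinals.encode_mem a above k⟩⟩

theorem exists_monotone_nat_tendsto_comp {X : Type*} {F : α → X} {l : Filter X}
    [l.IsCountablyGenerated] (hF : Tendsto F atTop l) :
    ∃ x : ℕ → α, Monotone x ∧ Tendsto (F ∘ x) atTop l := by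
  obtain ⟨V, hV⟩ := l.exists_antitone_basis
  have htail (n : ℕ) : ∃ b, ∀ a ≥ b, F a ∈ V n := eventually_atTop.1 (hF (hV.mem n))
  choose b hb using htail
  obtain ⟨x, hx, hbx⟩ := exists_monotone_nat_forall_exists_le b
  refine ⟨x, hx, hV.1.tendsto_right_iff.2 fun n _ => ?_⟩
  obtain ⟨m, hm⟩ := hbx n
  exact eventually_atTop.2 ⟨m, fun k hk => hb n _ (hm.trans (hx hk))⟩

theorem exists_monotone_nat_tendsto_comp_of_equicontinuous {T β : Type*} [TopologicalSpace T]
    [TopologicalSpace.SeparableSpace T] [UniformSpace β] [FirstCountableTopology β]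
    {F : α → T → β} {g : T → β} (hF : Equicontinuous F) (hlim : Tendsto F atTop (𝓝 g)) :
    ∃ x : ℕ → α, Monotone x ∧ Tendsto (F ∘ x) atTop (𝓝 g) := by
  obtain ⟨D, hD, hDdense⟩ := TopologicalSpace.exists_countable_dense T
  have := hD.to_subtype
  have hlimD : Tendsto (fun a => D.domRestrict (F a)) atTop (𝓝 (D.domRestrict g)) :=
    tendsto_pi_nhds.2 fun t => tendsto_pi_nhds.1 hlim t
  obtain ⟨x, hx, hxD⟩ := exists_monotone_nat_tendsto_comp hlimD
  have hclosed : IsClosed {t | Tendsto (fun n => F (x n) t) atTop (𝓝 (g t))} :=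
    (hF.comp x).isClosed_setOfPred_tendsto (hlim.continuous_of_equicontinuous hF)
  have hsub : D ⊆ {t | Tendsto (fun n => F (x n) t) atTop (𝓝 (g t))} :=
    fun t ht => tendsto_pi_nhds.1 hxD ⟨t, ht⟩
  exact ⟨x, hx, tendsto_pi_nhds.2 fun t => closure_minimal hsub hclosed (hDdense t)⟩

end DirectedOrder

theorem exists_monotone_seq_tendsto_of_isLUB_of_equicontinuous {T β : Type*} [TopologicalSpace T]
    [TopologicalSpace.SeparableSpace T] [Preorder β] [UniformSpace β] [SupConvergenceClass β]
    [FirstCountableTopology β] {S : Set (T → β)} {g : T → β} (hne : S.Nonempty)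
    (hdir : DirectedOn (· ≤ ·) S) (hS : S.Equicontinuous) (hg : IsLUB S g) :
    ∃ f : ℕ → T → β, (∀ n, f n ∈ S) ∧ Monotone f ∧ Tendsto f atTop (𝓝 g) := by
  have := hne.to_subtype
  have := hdir.isDirectedOrder
  obtain ⟨x, hx, hlim⟩ := exists_monotone_nat_tendsto_comp_of_equicontinuous hS
    (SupConvergenceClass.tendsto_coe_atTop_isLUB g S hg)
  exact ⟨fun n => x n, fun n => (x n).2, hx, hlim⟩

theorem lipschitzWith_integral_boundedContinuousFunction {X E : Type*} [TopologicalSpace X]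
    [MeasurableSpace X] [OpensMeasurableSpace X] [NormedAddCommGroup E] [NormedSpace ℝ E]
    [SecondCountableTopology E] (μ : Measure X) [IsFiniteMeasure μ] :
    LipschitzWith (measureUnivNNReal μ) fun f : BoundedContinuousFunction X E => ∫ x, f x ∂μ := by
  borelize E
  refine LipschitzWith.of_dist_le_mul fun f g => ?_
  rw [dist_eq_norm, dist_eq_norm, ← integral_sub (f.integrable μ) (g.integrable μ)]
  exact (f - g).norm_integral_le_mul_norm μ

section SqIntegral

variable {K : Type*} [TopologicalSpace K] [MeasurableSpace K] (U : Submodule ℝ C(K, ℝ))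

/-- The function `u ↦ ∫ u² dν` on `U`, through which `ν` enters the preorder `sqPre U`. -/
noncomputable def sqIntegral (ν : ProbabilityMeasure K) (u : U) : ℝ :=
  ∫ x, (u : C(K, ℝ)) x ^ 2 ∂(ν : Measure K)

theorem sqPre_iff_sqIntegral_le {ν ν' : ProbabilityMeasure K} :
    sqPre U ν ν' ↔ sqIntegral U ν ≤ sqIntegral U ν' :=
  ⟨fun h u => h u u.2, fun h u hu => h ⟨u, hu⟩⟩

variable [CompactSpace K] [OpensMeasurableSpace K]

theorem equicontinuous_sqIntegral : Equicontinuous (sqIntegral U) := by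
  have hint : Equicontinuous fun (ν : ProbabilityMeasure K) (f : BoundedContinuousFunction K ℝ) =>
      ∫ x, f x ∂(ν : Measure K) :=
    (LipschitzWith.uniformEquicontinuous _ 1 fun ν => by
      simpa [measureUnivNNReal] using
        lipschitzWith_integral_boundedContinuousFunction (ν : Measure K)).equicontinuous
  have hsq : Continuous fun u : U => BoundedContinuousFunction.mkOfCompact ((u : C(K, ℝ)) ^ 2) :=
    (ContinuousMap.isometryEquivBoundedOfCompact K ℝ).continuous.comp (by fun_prop)
  exact equicontinuous_iff_continuous.2 ((equicontinuous_iff_continuous.1 hint).comp hsq)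

theorem bddAbove_range_sqIntegral : BddAbove (Set.range (sqIntegral U)) := by
  refine ⟨fun u => ‖BoundedContinuousFunction.mkOfCompact ((u : C(K, ℝ)) ^ 2)‖, ?_⟩
  rintro _ ⟨ν, rfl⟩ u
  exact (le_abs_self _).trans (BoundedContinuousFunction.norm_integral_le_norm (ν : Measure K)
    (BoundedContinuousFunction.mkOfCompact ((u : C(K, ℝ)) ^ 2)))

end SqIntegral

theorem exists_monotone_seq_tendsto_sSup_of_chain_general
    {K : Type*} [TopologicalSpace K] [CompactSpace K] [MeasurableSpace K] [OpensMeasurableSpace K]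
    (U : Submodule ℝ C(K, ℝ)) [TopologicalSpace.SeparableSpace U]
    (C : Set (ProbabilityMeasure K)) (hC : C.Nonempty) (hdir : DirectedOn (sqPre U) C) :
    ∃ ν : ℕ → ProbabilityMeasure K, (∀ i, ν i ∈ C) ∧
      (∀ i j, i ≤ j → sqPre U (ν i) (ν j)) ∧
      ∀ u ∈ U, Tendsto (fun i => ∫ x, (u x) ^ 2 ∂(ν i : Measure K)) atTop
        (𝓝 (sSup ((fun ν' : ProbabilityMeasure K =>
          ∫ x, (u x) ^ 2 ∂(ν' : Measure K)) '' C))) := by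
  have hS : (sqIntegral U '' C).Equicontinuous :=
    Set.Equicontinuous.mono (equicontinuous_iff_range.1 (equicontinuous_sqIntegral U))
      (Set.image_subset_range _ _)
  have hdir' : DirectedOn (· ≤ ·) (sqIntegral U '' C) :=
    directedOn_image.2 (hdir.mono fun _ _ h => (sqPre_iff_sqIntegral_le U).1 h)
  have hlub : IsLUB (sqIntegral U '' C) (sSup (sqIntegral U '' C)) :=
    isLUB_csSup (hC.image _) ((bddAbove_range_sqIntegral U).mono (Set.image_subset_range _ _))
  obtain ⟨f, hfC, hf, hlim⟩ :=
    exists_monotone_seq_tendsto_of_isLUB_of_equicontinuous (hC.image _) hdir' hS hlub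
  choose ν hνC hνf using hfC
  obtain rfl : (fun i => sqIntegral U (ν i)) = f := funext hνf
  refine ⟨ν, hνC, fun i j hij => (sqPre_iff_sqIntegral_le U).2 (hf hij), fun u hu => ?_⟩
  have := tendsto_pi_nhds.1 hlim ⟨u, hu⟩
  rwa [sSup_apply_eq_sSup_image, Set.image_image] at this

theorem exists_monotone_seq_tendsto_sSup_of_chain
    {K : Type*} [MetricSpace K] [CompactSpace K] [MeasurableSpace K] [BorelSpace K]
    (U : Submodule ℝ C(K, ℝ)) [FiniteDimensional ℝ U]
    (C : Set (ProbabilityMeasure K)) (hC : C.Nonempty) (hchain : IsChain (sqPre U) C) :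
    ∃ ν : ℕ → ProbabilityMeasure K, (∀ i, ν i ∈ C) ∧
      (∀ i j, i ≤ j → sqPre U (ν i) (ν j)) ∧
      ∀ u ∈ U, Tendsto (fun i => ∫ x, (u x) ^ 2 ∂(ν i : Measure K)) atTop
        (𝓝 (sSup ((fun ν' : ProbabilityMeasure K =>
          ∫ x, (u x) ^ 2 ∂(ν' : Measure K)) '' C))) := by
  have : Std.Refl (sqPre U) := ⟨fun _ _ _ => le_rfl⟩
  exact exists_monotone_seq_tendsto_sSup_of_chain_general U C hC hchain.directedOn
end

section
/- Let K be a compact metric space equipped with its Borel σ-algebra, and let U be a finite-dimensional subspace of the space C(K, ℝ) of continuous real-valued functions on K. On the set P(K) of Borel probability measures on K define a preorder by: ν ⪯ ν' iff ∫_K u² dν ≤ ∫_K u² dν' for every u ∈ U. Fix ν₁ ∈ P(K) and set M₁ = {ν ∈ P(K) : ν₁ ⪯ ν}. Then every nonempty chain C ⊆ M₁ has an upper bound in M₁, i.e. there exists σ ∈ M₁ with ν ⪯ σ for all ν ∈ C. -/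
/-!
On a compact Hausdorff space the probability measures form a weakly compact space, and the sets
`{σ | ν ⪯ σ}` are weakly closed because each `u ^ 2` is a continuous test function. As `ν` runs
over a directed set these sets form a directed family of nonempty compact sets, so they have a
common point.
-/

open MeasureTheory Filter Topology

theorem exists_forall_rel_of_directedOn {X : Type*} [TopologicalSpace X] [CompactSpace X]
    {r : X → X → Prop} [IsTrans X r] (hr : ∀ x, IsClosed {y | r x y})
    {s : Set X} (hne : s.Nonempty) (hs : DirectedOn r s) : ∃ y, ∀ x ∈ s, r x y := by
  have : Nonempty s := hne.to_subtype
  have upper_directed : Directed (· ⊇ ·) fun x : s => {y | r x y} := by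
    intro a b
    obtain ⟨c, hac, hbc⟩ := hs.directed_val a b
    exact ⟨c, fun _ => trans hac, fun _ => trans hbc⟩
  have upper_nonempty (x : s) : {y | r x y}.Nonempty :=
    let ⟨y, _, hxy, _⟩ := hs x x.2 x x.2
    ⟨y, hxy⟩
  obtain ⟨y, hy⟩ := IsCompact.nonempty_iInter_of_directed_nonempty_isCompact_isClosed _
    upper_directed upper_nonempty (fun x => (hr x).isCompact) fun x => hr x
  exact ⟨y, fun x hx => Set.mem_iInter.1 hy ⟨x, hx⟩⟩

section sqPre

variable {K : Type*} [TopologicalSpace K] [MeasurableSpace K] (U : Submodule ℝ C(K, ℝ))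

instance sqPre.isPreorder : IsPreorder (ProbabilityMeasure K) (sqPre U) where
  refl _ _ _ := le_rfl
  trans _ _ _ h h' u hu := (h u hu).trans (h' u hu)

theorem isClosed_setOf_sqPre [CompactSpace K] [OpensMeasurableSpace K] (ν : ProbabilityMeasure K) :
    IsClosed {σ | sqPre U ν σ} := by
  simp only [sqPre, Set.ofPred_forall]
  exact isClosed_biInter fun u _ => isClosed_le continuous_const
    (ProbabilityMeasure.continuous_integral_continuousMap (u ^ 2))

theorem chain_has_upper_bound_general [T2Space K] [CompactSpace K] [BorelSpace K]
    (ν₁ : ProbabilityMeasure K) {C : Set (ProbabilityMeasure K)}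
    (hC : C ⊆ {ν | sqPre U ν₁ ν}) (hdir : DirectedOn (sqPre U) C) :
    ∃ σ, sqPre U ν₁ σ ∧ ∀ ν ∈ C, sqPre U ν σ := by
  have hins : DirectedOn (sqPre U) (insert ν₁ C) :=
    hdir.insert ν₁ fun ν hν => ⟨ν, hν, hC hν, refl ν⟩
  simpa only [Set.forall_mem_insert] using
    exists_forall_rel_of_directedOn (isClosed_setOf_sqPre U) (Set.insert_nonempty ν₁ C) hins

end sqPre

theorem chain_has_upper_bound
    {K : Type*} [MetricSpace K] [CompactSpace K] [MeasurableSpace K] [BorelSpace K]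
    (U : Submodule ℝ C(K, ℝ)) [FiniteDimensional ℝ U]
    (ν₁ : ProbabilityMeasure K) :
    ∀ C : Set (ProbabilityMeasure K),
      C ⊆ {ν : ProbabilityMeasure K | sqPre U ν₁ ν} → C.Nonempty → IsChain (sqPre U) C →
      ∃ σ : ProbabilityMeasure K, sqPre U ν₁ σ ∧ ∀ ν ∈ C, sqPre U ν σ :=
  fun _ hC _ hchain => chain_has_upper_bound_general U ν₁ hC hchain.directedOn
end

section
/- Let K be a compact metric space equipped with its Borel σ-algebra, and let U be a finite-dimensional subspace of the space C(K, ℝ) of continuous real-valued functions on K. On the set P(K) of Borel probability measures on K define a preorder by: ν ⪯ ν' iff ∫_K u² dν ≤ ∫_K u² dν' for every u ∈ U. Fix ν₁ ∈ P(K) and set M₁ = {ν ∈ P(K) : ν₁ ⪯ ν}. Then M₁ contains a maximal element ν, i.e. an element ν ∈ M₁ such that every σ ∈ M₁ with ν ⪯ σ also satisfies σ ⪯ ν. -/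
open MeasureTheory Filter Topology

/-!
For continuous `f` the map `ν ↦ ∫ f dν` is weak-* continuous, and `P(K)` is weak-* compact, so the
vectors `(∫ u² dν)_{u ∈ U}` form a compact set in the product order of `U → ℝ`. In a preorder with
closed upper rays `[a, ∞)`, Cantor's intersection theorem gives every nonempty chain in a compact
set an upper bound in that set, and Zorn's lemma provides maximal points.
-/

section CompactPreorder

variable {α : Type*} [Preorder α] [TopologicalSpace α] [ClosedIciTopology α] {s c : Set α} {a : α}

theorem exists_mem_upperBounds_of_isCompact_of_directedOn (hs : IsCompact s) (hcs : c ⊆ s)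
    (hc : DirectedOn (· ≤ ·) c) (hne : c.Nonempty) : ∃ b ∈ s, b ∈ upperBounds c := by
  have : Nonempty c := hne.to_subtype
  have hdir : Directed (· ⊇ ·) fun x : c => Set.Ici (x : α) :=
    hc.directed_val.mono_comp (g := Set.Ici) _ fun _ _ => Set.Ici_subset_Ici.2
  have hinter : (s ∩ ⋂ x : c, Set.Ici (x : α)).Nonempty := by
    by_contra hempty
    obtain ⟨x, hx⟩ := hs.elim_directed_family_closed _ (fun _ => isClosed_Ici)
      (Set.not_nonempty_iff_eq_empty.1 hempty) hdir
    exact Set.eq_empty_iff_forall_notMem.1 hx x ⟨hcs x.2, Set.self_mem_Ici⟩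
  obtain ⟨b, hbs, hb⟩ := hinter
  exact ⟨b, hbs, fun x hx => Set.mem_iInter.1 hb ⟨x, hx⟩⟩

theorem exists_le_maximal_of_isCompact (hs : IsCompact s) (ha : a ∈ s) :
    ∃ m, a ≤ m ∧ Maximal (· ∈ s) m :=
  zorn_le_nonempty₀ s (fun _ hcs hc y hy =>
    exists_mem_upperBounds_of_isCompact_of_directedOn hs hcs hc.directedOn ⟨y, hy⟩) a ha

end CompactPreorder

theorem exists_maximal_element_general
    {K ι : Type*} [TopologicalSpace K] [T2Space K] [CompactSpace K] [MeasurableSpace K]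
    [BorelSpace K] (f : ι → C(K, ℝ)) (ν₁ : ProbabilityMeasure K) :
    ∃ ν : ProbabilityMeasure K,
      (∀ i, ∫ x, f i x ∂(ν₁ : Measure K) ≤ ∫ x, f i x ∂(ν : Measure K)) ∧
      ∀ σ : ProbabilityMeasure K,
        (∀ i, ∫ x, f i x ∂(ν : Measure K) ≤ ∫ x, f i x ∂(σ : Measure K)) →
          ∀ i, ∫ x, f i x ∂(σ : Measure K) ≤ ∫ x, f i x ∂(ν : Measure K) := by
  let integrals (ν : ProbabilityMeasure K) (i : ι) : ℝ := ∫ x, f i x ∂(ν : Measure K)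
  have hcont : Continuous integrals :=
    continuous_pi fun i => ProbabilityMeasure.continuous_integral_continuousMap (f i)
  obtain ⟨_, hle, ⟨ν, rfl⟩, hmax⟩ :=
    exists_le_maximal_of_isCompact (isCompact_range hcont) (Set.mem_range_self ν₁)
  exact ⟨ν, hle, fun σ hσ => hmax (Set.mem_range_self σ) hσ⟩

theorem exists_maximal_element
    {K : Type*} [MetricSpace K] [CompactSpace K] [MeasurableSpace K] [BorelSpace K]
    (U : Submodule ℝ C(K, ℝ)) [FiniteDimensional ℝ U]
    (ν₁ : ProbabilityMeasure K) :
    ∃ ν : ProbabilityMeasure K, sqPre U ν₁ ν ∧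
      ∀ σ : ProbabilityMeasure K, sqPre U ν₁ σ → sqPre U ν σ → sqPre U σ ν := by
  obtain ⟨ν, hν, hmax⟩ := exists_maximal_element_general (fun u : U => (u : C(K, ℝ)) ^ 2) ν₁
  exact ⟨ν, Subtype.forall.1 hν, fun σ _ hσ => Subtype.forall.1 (hmax σ (Subtype.forall.2 hσ))⟩
end

section
/- Let K be a compact metric space equipped with its Borel σ-algebra, and let U be a finite-dimensional subspace of the space C(K, ℝ) of continuous real-valued functions on K. On the set P(K) of Borel probability measures on K define a preorder by: ν ⪯ ν' iff ∫_K u² dν ≤ ∫_K u² dν' for every u ∈ U. Let q : K → P(K) be a Markov kernel (a measurable map, where P(K) carries the Borel σ-algebra of the weak convergence topology) such that u(x)² ≤ ∫_K u² d(q x) for every x ∈ K and every u ∈ U. Fix ν₁ ∈ P(K) and set M₁ = {ν ∈ P(K) : ν₁ ⪯ ν}. If ν is a maximal element of M₁ (i.e. ν ∈ M₁ and every σ ∈ M₁ with ν ⪯ σ satisfies σ ⪯ ν), then for every u ∈ U one has ∫_K u² dν = ∫_K ( ∫_K u² d(q x) ) dν(x). -/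
open MeasureTheory Filter Topology

/-!
Averaging the pointwise inequality `u(x)² ≤ ∫ u² d(q x)` over `ν` shows that the image `ν'` of `ν`
under the kernel dominates `ν`. By transitivity `ν'` lies in `M₁`, so maximality of `ν` gives
`ν' ⪯ ν`, and the two comparisons together say that `∫ u² dν = ∫ u² dν'`.

That `ν'` makes sense requires `x ↦ (q x)(A)` to be measurable. For closed `A`, the evaluation
`μ ↦ μ A` is a pointwise limit of weakly continuous functionals, namely integrals of continuous
functions approximating the indicator of `A`; the closed sets form a π-system generating the
Borel sets.
-/

section WeakTopology

variable {Ω : Type*} [TopologicalSpace Ω] [HasOuterApproxClosed Ω] [MeasurableSpace Ω]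

theorem measurable_borel_measure_of_isClosed [OpensMeasurableSpace Ω] {F : Set Ω}
    (hF : IsClosed F) :
    Measurable[borel (ProbabilityMeasure Ω)] fun μ : ProbabilityMeasure Ω ↦ (μ : Measure Ω) F := by
  borelize (ProbabilityMeasure Ω)
  have hmeas (n : ℕ) :
      Measurable fun μ : ProbabilityMeasure Ω ↦ ∫⁻ x, hF.apprSeq n x ∂(μ : Measure Ω) :=
    (ProbabilityMeasure.continuous_lintegral_boundedContinuousFunction (hF.apprSeq n)).measurable
  exact measurable_of_tendsto_metrizable hmeas <|
    tendsto_pi_nhds.2 fun μ ↦ HasOuterApproxClosed.tendsto_lintegral_apprSeq hF μ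

theorem measurableSpace_probabilityMeasure_le_borel [BorelSpace Ω] :
    (inferInstance : MeasurableSpace (ProbabilityMeasure Ω)) ≤ borel (ProbabilityMeasure Ω) := by
  have hgen : ‹MeasurableSpace Ω› = .generateFrom {F | IsClosed F} :=
    BorelSpace.measurable_eq.trans borel_eq_generateFrom_isClosed
  have hcoe : Measurable[borel (ProbabilityMeasure Ω)] fun μ : ProbabilityMeasure Ω ↦
      (μ : Measure Ω) := by
    borelize (ProbabilityMeasure Ω)
    exact .measure_of_isPiSystem_of_isProbabilityMeasure hgen isPiSystem_isClosed
      fun _ ↦ measurable_borel_measure_of_isClosed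
  exact measurable_iff_comap_le.1 hcoe

end WeakTopology

open ProbabilityTheory

section Kernel

variable {α β : Type*} [MeasurableSpace α] [MeasurableSpace β]

/-- The Markov kernel given by a family of probability measures that is measurable for the
σ-algebra generated by the evaluations `μ ↦ μ s`, Mathlib's σ-algebra on `ProbabilityMeasure`. -/
def markovKernel (q : α → ProbabilityMeasure β) (hq : Measurable q) : Kernel α β :=
  ⟨fun x ↦ (q x : Measure β), measurable_subtype_coe.comp hq⟩

instance (q : α → ProbabilityMeasure β) (hq : Measurable q) : IsMarkovKernel (markovKernel q hq) :=
  ⟨fun x ↦ (q x).2⟩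

/-- The image of a probability measure under a Markov kernel, as a bundled probability measure. -/
noncomputable def kernelImage (κ : Kernel α β) [IsMarkovKernel κ] (ν : ProbabilityMeasure α) :
    ProbabilityMeasure β :=
  ⟨κ ∘ₘ (ν : Measure α), inferInstance⟩

variable {E : Type*} [NormedAddCommGroup E] [NormedSpace ℝ E]
  {κ : Kernel α β} {μ : Measure α} {f : β → E}

theorem integrable_integral_of_integrable_comp (hf : Integrable f (κ ∘ₘ μ)) :
    Integrable (fun x ↦ ∫ y, f y ∂κ x) μ := by
  rw [Measure.comp_eq_comp_const_apply] at hf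
  exact hf.integral_comp

theorem integral_measure_comp (hf : Integrable f (κ ∘ₘ μ)) :
    ∫ y, f y ∂(κ ∘ₘ μ) = ∫ x, ∫ y, f y ∂κ x ∂μ := by
  rw [Measure.comp_eq_comp_const_apply] at hf ⊢
  exact Kernel.integral_comp hf

end Kernel

section SqPre

theorem sqPre_trans {K : Type*} [TopologicalSpace K] [MeasurableSpace K]
    {U : Submodule ℝ C(K, ℝ)} {ν₁ ν₂ ν₃ : ProbabilityMeasure K}
    (h₁₂ : sqPre U ν₁ ν₂) (h₂₃ : sqPre U ν₂ ν₃) : sqPre U ν₁ ν₃ :=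
  fun u hu ↦ (h₁₂ u hu).trans (h₂₃ u hu)

variable {K : Type*} [TopologicalSpace K] [CompactSpace K] [MeasurableSpace K]
  [OpensMeasurableSpace K]

theorem integrable_continuousMap_sq (u : C(K, ℝ)) (μ : Measure K) [IsFiniteMeasureOnCompacts μ] :
    Integrable (fun x ↦ (u x) ^ 2) μ :=
  (u.continuous.pow 2).integrable_of_hasCompactSupport (.of_compactSpace _)

theorem integral_sq_kernelImage {α : Type*} [MeasurableSpace α] (κ : Kernel α K)
    [IsMarkovKernel κ] (ν : ProbabilityMeasure α) (u : C(K, ℝ)) :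
    ∫ y, (u y) ^ 2 ∂(kernelImage κ ν : Measure K)
      = ∫ x, (∫ y, (u y) ^ 2 ∂κ x) ∂(ν : Measure α) :=
  integral_measure_comp (integrable_continuousMap_sq u _)

theorem sqPre_kernelImage {U : Submodule ℝ C(K, ℝ)} {κ : Kernel K K} [IsMarkovKernel κ]
    {ν : ProbabilityMeasure K}
    (hκ : ∀ u ∈ U, ∀ᵐ x ∂(ν : Measure K), (u x) ^ 2 ≤ ∫ y, (u y) ^ 2 ∂κ x) :
    sqPre U ν (kernelImage κ ν) := by
  intro u hu
  rw [integral_sq_kernelImage]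
  exact integral_mono_ae (integrable_continuousMap_sq u _)
    (integrable_integral_of_integrable_comp (integrable_continuousMap_sq u _)) (hκ u hu)

theorem maximal_element_is_fixed_by_kernel_general
    (U : Submodule ℝ C(K, ℝ)) (κ : Kernel K K) [IsMarkovKernel κ] (ν₁ ν : ProbabilityMeasure K)
    (hκ : ∀ u ∈ U, ∀ᵐ x ∂(ν : Measure K), (u x) ^ 2 ≤ ∫ y, (u y) ^ 2 ∂κ x)
    (hν : sqPre U ν₁ ν)
    (hmax : ∀ σ : ProbabilityMeasure K, sqPre U ν₁ σ → sqPre U ν σ → sqPre U σ ν) :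
    ∀ u ∈ U, ∫ x, (u x) ^ 2 ∂(ν : Measure K)
      = ∫ x, (∫ y, (u y) ^ 2 ∂κ x) ∂(ν : Measure K) := by
  intro u hu
  have hle : sqPre U ν (kernelImage κ ν) := sqPre_kernelImage hκ
  have hge : sqPre U (kernelImage κ ν) ν := hmax _ (sqPre_trans hν hle) hle
  rw [← integral_sq_kernelImage]
  exact le_antisymm (hle u hu) (hge u hu)

end SqPre

theorem maximal_element_is_fixed_by_kernel
    {K : Type*} [MetricSpace K] [CompactSpace K] [MeasurableSpace K] [BorelSpace K]
    (U : Submodule ℝ C(K, ℝ)) [FiniteDimensional ℝ U]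
    (q : K → ProbabilityMeasure K)
    (hq : @Measurable K (ProbabilityMeasure K) _ (borel (ProbabilityMeasure K)) q)
    (hqU : ∀ x : K, ∀ u ∈ U, (u x) ^ 2 ≤ ∫ y, (u y) ^ 2 ∂(q x : Measure K))
    (ν₁ ν : ProbabilityMeasure K)
    (hν : sqPre U ν₁ ν)
    (hmax : ∀ σ : ProbabilityMeasure K, sqPre U ν₁ σ → sqPre U ν σ → sqPre U σ ν) :
    ∀ u ∈ U, ∫ x, (u x) ^ 2 ∂(ν : Measure K)
      = ∫ x, (∫ y, (u y) ^ 2 ∂(q x : Measure K)) ∂(ν : Measure K) :=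
  maximal_element_is_fixed_by_kernel_general U
    (markovKernel q (hq.mono le_rfl measurableSpace_probabilityMeasure_le_borel)) ν₁ ν
    (fun u hu ↦ ae_of_all _ fun x ↦ hqU x u hu) hν hmax
end
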